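/- There exists a unique representation basis A of the integers such that limsup_{x→∞} A(-x,x)/√x ≥ √2/2. -/

import Mathlib

open Filter Set

/-- `repCount A n` is the number of representations of `n` as `a + a'` with
`a ≤ a'` and `a, a' ∈ A`. -/
noncomputable def repCount (A : Set ℤ) (n : ℤ) : ℕ :=
  {p : ℤ × ℤ | p.1 ∈ A ∧ p.2 ∈ A ∧ p.1 ≤ p.2 ∧ p.1 + p.2 = n}.ncard

/-- `A` is a unique representation basis of `ℤ` if `r_A(n) = 1` for all `n`. -/
def IsUniqueRepBasis (A : Set ℤ) : Prop := ∀ n : ℤ, repCount A n = 1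

/-- `countIn A y x` is the number of elements of `A` in the real interval `[y, x]`. -/
noncomputable def countIn (A : Set ℤ) (y x : ℝ) : ℕ :=
  {a : ℤ | a ∈ A ∧ y ≤ (a : ℝ) ∧ (a : ℝ) ≤ x}.ncard

/-!
A unique representation basis is a Sidon set `A` with `A + A = ℤ`. Finite Sidon sets can be extended
in two ways: by a pair `{u, n - u}` with `u` huge, which makes `n` a sum, and by a far translate of
a Sidon set of size `p - 1` in `[0, p ^ 2)`, from which `O(1)` elements have been removed so that
its differences avoid those of the set being extended. The second extension puts `p - O(1)` elements
below `2 * p ^ 2 + O(p)`, a ratio tending to `1 / √2`. Interleaving the two kinds of extensions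
countably often gives `A`. Since a `limsup` in `ℝ` of an unbounded function is a junk value, the
ratio must also be bounded above, which follows from counting the sums of a Sidon set.
-/

open scoped Finset Pointwise Topology

section Sidon

/-- A Sidon set: a sum of two elements determines the two summands up to order. -/
def IsSidon {M : Type*} [Add M] (A : Set M) : Prop :=
  ∀ ⦃a⦄, a ∈ A → ∀ ⦃b⦄, b ∈ A → ∀ ⦃c⦄, c ∈ A → ∀ ⦃d⦄, d ∈ A →
    a + b = c + d → a = c ∧ b = d ∨ a = d ∧ b = c

namespace IsSidon

variable {M N : Type*}

theorem mono [Add M] {A B : Set M} (hB : IsSidon B) (hAB : A ⊆ B) : IsSidon A :=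
  fun _ ha _ hb _ hc _ hd ↦ hB (hAB ha) (hAB hb) (hAB hc) (hAB hd)

theorem of_mapsTo_injOn [Add M] [Add N] {F : Type*} [FunLike F M N] [AddHomClass F M N] {f : F}
    {A : Set M} {B : Set N} (hB : IsSidon B) (hf : MapsTo f A B) (hinj : InjOn f A) :
    IsSidon A := by
  intro a ha b hb c hc d hd h
  have hfh : f a + f b = f c + f d := by rw [← map_add, h, map_add]
  exact (hB (hf ha) (hf hb) (hf hc) (hf hd) hfh).imp
    (.imp (hinj ha hc) (hinj hb hd)) (.imp (hinj ha hd) (hinj hb hc))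

theorem vadd [AddCancelCommMonoid M] {A : Set M} (hA : IsSidon A) (g : M) :
    IsSidon (g +ᵥ A) := by
  rintro _ ⟨a, ha, rfl⟩ _ ⟨b, hb, rfl⟩ _ ⟨c, hc, rfl⟩ _ ⟨d, hd, rfl⟩ h
  simp only [vadd_eq_add, add_add_add_comm g, add_right_inj] at h ⊢
  exact hA ha hb hc hd h

theorem union [AddCommMagma M] {A B : Set M} (hA : IsSidon A) (hB : IsSidon B)
    (hAA_BB : Disjoint (A + A) (B + B)) (hAA_AB : Disjoint (A + A) (A + B))
    (hBB_AB : Disjoint (B + B) (A + B)) (hAB : InjOn (fun q : M × M ↦ q.1 + q.2) (A ×ˢ B)) :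
    IsSidon (A ∪ B) := by
  have mixed {a b c d : M} (ha : a ∈ A) (hb : b ∈ B) (hc : c ∈ A) (hd : d ∈ B)
      (h : a + b = c + d) : a = c ∧ b = d :=
    Prod.ext_iff.1 (hAB (mk_mem_prod ha hb) (mk_mem_prod hc hd) h)
  have mem_BA {x y : M} (hx : x ∈ B) (hy : y ∈ A) : x + y ∈ A + B :=
    ⟨y, hy, x, hx, add_comm y x⟩
  rintro a (ha | ha) b (hb | hb) c (hc | hc) d (hd | hd) h
  · exact hA ha hb hc hd h
  · exact absurd h (hAA_AB.ne_of_mem (add_mem_add ha hb) (add_mem_add hc hd))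
  · exact absurd h (hAA_AB.ne_of_mem (add_mem_add ha hb) (mem_BA hc hd))
  · exact absurd h (hAA_BB.ne_of_mem (add_mem_add ha hb) (add_mem_add hc hd))
  · exact absurd h.symm (hAA_AB.ne_of_mem (add_mem_add hc hd) (add_mem_add ha hb))
  · exact .inl (mixed ha hb hc hd h)
  · exact .inr (mixed ha hb hd hc (h.trans (add_comm c d)))
  · exact absurd h.symm (hBB_AB.ne_of_mem (add_mem_add hc hd) (add_mem_add ha hb))
  · exact absurd h.symm (hAA_AB.ne_of_mem (add_mem_add hc hd) (mem_BA ha hb))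
  · exact .inr (mixed hb ha hc hd ((add_comm b a).trans h)).symm
  · exact .inl (mixed hb ha hd hc ((add_comm b a).trans (h.trans (add_comm c d)))).symm
  · exact absurd h.symm (hBB_AB.ne_of_mem (add_mem_add hc hd) (mem_BA ha hb))
  · exact absurd h.symm (hAA_BB.ne_of_mem (add_mem_add hc hd) (add_mem_add ha hb))
  · exact absurd h (hBB_AB.ne_of_mem (add_mem_add ha hb) (add_mem_add hc hd))
  · exact absurd h (hBB_AB.ne_of_mem (add_mem_add ha hb) (mem_BA hc hd))
  · exact hB ha hb hc hd h

theorem iUnion_of_directed [Add M] {ι : Type*} [Nonempty ι] {s : ι → Set M}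
    (hs : Directed (· ⊆ ·) s) (h : ∀ i, IsSidon (s i)) : IsSidon (⋃ i, s i) := by
  classical
  intro a ha b hb c hc d hd
  have hsub : (({a, b, c, d} : Finset M) : Set M) ⊆ ⋃ i, s i := by
    simp only [Finset.coe_insert, Finset.coe_singleton, insert_subset_iff, singleton_subset_iff]
    exact ⟨ha, hb, hc, hd⟩
  obtain ⟨i, hi⟩ := hs.exists_mem_subset_of_finset_subset_biUnion hsub
  exact h i (hi (by simp)) (hi (by simp)) (hi (by simp)) (hi (by simp))

theorem injOn_sym2_add [AddCommMagma M] {A : Set M} (hA : IsSidon A) :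
    InjOn Sym2.add A.sym2 := by
  rintro ⟨a, b⟩ hab ⟨c, d⟩ hcd h
  exact Sym2.eq_iff.2 (hA hab.1 hab.2 hcd.1 hcd.2 h)

theorem card_add_self [AddCommMagma M] [DecidableEq M] {A : Finset M}
    (hA : IsSidon (A : Set M)) : #(A + A) = (#A + 1).choose 2 := by
  have himage : A.sym2.image Sym2.add = A + A := by
    ext x
    simp [Finset.mem_add, Sym2.exists, and_assoc]
  rw [← himage, Finset.card_image_of_injOn, Finset.card_sym2]
  simpa using hA.injOn_sym2_add

theorem card_filter_exists_sub_mem_le [AddCommGroup M] [DecidableEq M] {A : Finset M}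
    (hA : IsSidon (A : Set M)) (D : Finset M) :
    #{a ∈ A | ∃ b ∈ A, b ≠ a ∧ a - b ∈ D} ≤ #D := by
  have hex : ∀ a ∈ ({a ∈ A | ∃ b ∈ A, b ≠ a ∧ a - b ∈ D} : Finset M),
      ∃ b ∈ A, b ≠ a ∧ a - b ∈ D := fun a ha ↦ (Finset.mem_filter.1 ha).2
  choose! q hqA hq_ne hqD using hex
  refine Finset.card_le_card_of_injOn (fun a ↦ a - q a) hqD fun a ha b hb hab ↦ ?_
  have hsum : a + q b = b + q a := sub_eq_sub_iff_add_eq_add.1 hab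
  rcases hA (Finset.mem_filter.1 ha).1 (hqA b hb) (Finset.mem_filter.1 hb).1 (hqA a ha) hsum with
    ⟨h, -⟩ | ⟨h, -⟩
  · exact h
  · exact absurd h.symm (hq_ne a ha)

end IsSidon

theorem isSidon_pair {M : Type*} [AddCancelCommMonoid M] [IsAddTorsionFree M] (x y : M) :
    IsSidon {x, y} := by
  rintro a (rfl | rfl) b (rfl | rfl) c (rfl | rfl) d (rfl | rfl) h <;> grind

theorem isSidon_range_units_prod (R : Type*) [CommRing R] [NoZeroDivisors R] :
    IsSidon (range fun u : Rˣ ↦ (Additive.ofMul u, (u : R))) := by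
  rintro _ ⟨u, rfl⟩ _ ⟨v, rfl⟩ _ ⟨w, rfl⟩ _ ⟨z, rfl⟩ h
  have hsum : (u + v : R) = w + z := congrArg Prod.snd h
  have hmul : (u * v : R) = w * z :=
    congrArg (fun q : Additive Rˣ × R ↦ (q.1.toMul : R)) h
  -- `u` and `v` are the roots of `X ^ 2 - (w + z) * X + w * z`.
  have hroot : (u - w : R) * (u - z) = 0 := by linear_combination (u : R) * hsum - hmul
  rcases mul_eq_zero.1 hroot with huw | huz
  · obtain rfl : u = w := Units.ext (sub_eq_zero.1 huw)
    obtain rfl : v = z := Units.ext (add_left_cancel hsum)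
    exact .inl ⟨rfl, rfl⟩
  · obtain rfl : u = z := Units.ext (sub_eq_zero.1 huz)
    obtain rfl : v = w := Units.ext (add_left_cancel (hsum.trans (add_comm _ _)))
    exact .inr ⟨rfl, rfl⟩

theorem IsSidon.exists_int_of_isAddCyclic {G : Type*} [AddGroup G] [Finite G] [IsAddCyclic G]
    {B : Finset G} (hB : IsSidon (B : Set G)) :
    ∃ C : Finset ℤ, IsSidon (C : Set ℤ) ∧ (C : Set ℤ) ⊆ Ico 0 (Nat.card G) ∧ #C = #B := by
  have : NeZero (Nat.card G) := ⟨Nat.card_pos.ne'⟩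
  let e : ZMod (Nat.card G) ≃+ G := zmodAddCyclicAddEquiv ‹_›
  let lift (g : G) : ℤ := (e.symm g).val
  let proj : ℤ →+ G := (e : ZMod (Nat.card G) →+ G).comp (Int.castAddHom _)
  have proj_lift : Function.LeftInverse proj lift := fun g ↦ by simp [proj, lift]
  refine ⟨B.map ⟨lift, proj_lift.injective⟩, ?_, ?_, B.card_map _⟩
  · simp only [Finset.coe_map, Function.Embedding.coeFn_mk]
    refine hB.of_mapsTo_injOn (f := proj) ?_ ?_
    · rintro _ ⟨b, hb, rfl⟩
      rwa [proj_lift b]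
    · rintro _ ⟨b, -, rfl⟩ _ ⟨c, -, rfl⟩ h
      rw [proj_lift, proj_lift] at h
      rw [h]
  · simp only [Finset.coe_map, Function.Embedding.coeFn_mk, image_subset_iff]
    exact fun b _ ↦ ⟨Int.natCast_nonneg _, Int.ofNat_lt.2 (ZMod.val_lt _)⟩

theorem exists_isSidon_int_card_eq_prime_sub_one {p : ℕ} (hp : p.Prime) :
    ∃ B : Finset ℤ, IsSidon (B : Set ℤ) ∧ (B : Set ℤ) ⊆ Ico 0 ((p - 1) * p : ℕ) ∧ #B = p - 1 := by
  have : Fact p.Prime := ⟨hp⟩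
  let G := Additive (ZMod p)ˣ × ZMod p
  have card_units : Nat.card (Additive (ZMod p)ˣ) = p - 1 := by
    rw [Nat.card_congr Additive.toMul, Nat.card_eq_fintype_card, ZMod.card_units]
  have card_G : Nat.card G = (p - 1) * p := by rw [Nat.card_prod, card_units, Nat.card_zmod]
  have cyclic_G : IsAddCyclic G := by
    refine AddGroup.isAddCyclic_prod_iff.2 ⟨inferInstance, inferInstance, ?_⟩
    rw [card_units, Nat.card_zmod]
    exact (Nat.coprime_self_sub_left hp.one_le).2 (Nat.coprime_one_left p)
  let graph : (ZMod p)ˣ ↪ G := ⟨fun u ↦ (Additive.ofMul u, (u : ZMod p)), fun u v h ↦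
    Additive.ofMul.injective (congrArg Prod.fst h)⟩
  have sidon_graph : IsSidon ((Finset.univ.map graph : Finset G) : Set G) := by
    rw [Finset.coe_map, Finset.coe_univ, image_univ]
    exact isSidon_range_units_prod (ZMod p)
  obtain ⟨B, hB, hBG, hcard⟩ := sidon_graph.exists_int_of_isAddCyclic
  rw [Finset.card_map, Finset.card_univ, ZMod.card_units] at hcard
  exact ⟨B, hB, card_G ▸ hBG, hcard⟩

end Sidon

section Int

theorem exists_subset_Icc_neg_of_finite {A : Set ℤ} (hA : A.Finite) :
    ∃ m : ℕ, A ⊆ Icc (-m : ℤ) m := by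
  obtain ⟨m, hm⟩ := (hA.image Int.natAbs).bddAbove
  refine ⟨m, fun a ha ↦ ?_⟩
  have ha_le : a.natAbs ≤ m := hm (mem_image_of_mem _ ha)
  exact ⟨by omega, by omega⟩

namespace IsSidon

variable {A : Set ℤ}

theorem exists_subset_pairwise_lt_abs_sub {B : Finset ℤ} (hB : IsSidon (B : Set ℤ)) (n : ℕ) :
    ∃ C ⊆ B, (C : Set ℤ).Pairwise (fun a b ↦ n < |a - b|) ∧ #B ≤ #C + (2 * n + 1) := by
  let close : Finset ℤ := {a ∈ B | ∃ b ∈ B, b ≠ a ∧ a - b ∈ Finset.Icc (-n : ℤ) n}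
  have card_close : #close ≤ 2 * n + 1 := by
    refine (hB.card_filter_exists_sub_mem_le _).trans_eq ?_
    rw [Int.card_Icc]
    omega
  refine ⟨B \ close, Finset.sdiff_subset, fun a ha b hb hab ↦ ?_, ?_⟩
  · obtain ⟨haB, ha_close⟩ := Finset.mem_sdiff.1 ha
    by_contra! hle
    exact ha_close (Finset.mem_filter.2
      ⟨haB, b, (Finset.mem_sdiff.1 hb).1, hab.symm, Finset.mem_Icc.2 (abs_le.1 hle)⟩)
  · have := Finset.le_card_sdiff close B
    omega

theorem union_of_pairwise_lt_abs_sub (hA : IsSidon A) {m : ℕ} (hAm : A ⊆ Icc (-m : ℤ) m)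
    {F : Set ℤ} (hF : IsSidon F) {s t : ℤ} (hFst : F ⊆ Icc s t)
    (hsep : F.Pairwise fun a b ↦ 2 * m < |a - b|) (hms : 3 * m < s) (hts : t + m < 2 * s) :
    IsSidon (A ∪ F) := by
  have hAA : A + A ⊆ Icc (-m + -m : ℤ) (m + m) :=
    (add_subset_add hAm hAm).trans (Icc_add_Icc_subset ..)
  have hAF : A + F ⊆ Icc (-m + s) (m + t) := (add_subset_add hAm hFst).trans (Icc_add_Icc_subset ..)
  have hFF : F + F ⊆ Icc (s + s) (t + t) := (add_subset_add hFst hFst).trans (Icc_add_Icc_subset ..)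
  have disjoint_Icc {x y z w : ℤ} (hyz : y < z) : Disjoint (Icc x y) (Icc z w) :=
    disjoint_left.2 fun _ hx hz ↦ (hx.2.trans_lt hyz).not_ge hz.1
  refine hA.union hF (.mono hAA hFF (disjoint_Icc (by omega)))
    (.mono hAA hAF (disjoint_Icc (by omega))) (.mono hFF hAF (disjoint_Icc (by omega)).symm) ?_
  rintro ⟨a, b⟩ ⟨ha, hb⟩ ⟨c, d⟩ ⟨hc, hd⟩ (h : a + b = c + d)
  have hbd_le : |b - d| ≤ 2 * m := by
    have := hAm ha
    have := hAm hc
    simp only [mem_Icc, abs_le] at *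
    omega
  obtain rfl : b = d := by_contra fun hne ↦ (hsep hb hd hne).not_ge hbd_le
  rw [add_right_cancel h]

theorem exists_union_card_le (hA : IsSidon A) {m : ℕ} (hAm : A ⊆ Icc (-m : ℤ) m)
    {B : Finset ℤ} (hB : IsSidon (B : Set ℤ)) {n : ℕ} (hBn : (B : Set ℤ) ⊆ Ico 0 (n : ℤ)) :
    ∃ F : Finset ℤ, IsSidon (A ∪ F) ∧ (F : Set ℤ) ⊆ Icc 0 (2 * n + 3 * m : ℤ) ∧
      #B ≤ #F + (4 * m + 1) := by
  obtain ⟨C, hCB, hsep, hcard⟩ := hB.exists_subset_pairwise_lt_abs_sub (2 * m)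
  let F : Finset ℤ := (n + 3 * m + 1 : ℤ) +ᵥ C
  have hF : IsSidon (F : Set ℤ) := by
    rw [Finset.coe_vadd_finset]
    exact (hB.mono hCB).vadd _
  have hFsub : (F : Set ℤ) ⊆ Icc (n + 3 * m + 1 : ℤ) (2 * n + 3 * m) := by
    rw [Finset.coe_vadd_finset]
    rintro _ ⟨c, hc, rfl⟩
    obtain ⟨hc0, hcn⟩ := hBn (hCB hc)
    simp only [vadd_eq_add, mem_Icc]
    omega
  have hFsep : (F : Set ℤ).Pairwise fun a b ↦ 2 * (m : ℤ) < |a - b| := by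
    rw [Finset.coe_vadd_finset]
    rintro _ ⟨a, ha, rfl⟩ _ ⟨b, hb, rfl⟩ hab
    simpa using hsep ha hb (ne_of_apply_ne _ hab)
  refine ⟨F, hA.union_of_pairwise_lt_abs_sub hAm hF hFsub hFsep ?_ ?_, ?_, ?_⟩
  · omega
  · omega
  · exact hFsub.trans (Icc_subset_Icc_left (by omega))
  · rw [Finset.card_vadd_finset]
    omega

theorem exists_superset_mem_add_self (hA : IsSidon A) (hfin : A.Finite) (n : ℤ) :
    ∃ B, A ⊆ B ∧ B.Finite ∧ IsSidon B ∧ n ∈ B + B := by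
  by_cases hn : n ∈ A + A
  · exact ⟨A, subset_rfl, hfin, hA, hn⟩
  obtain ⟨m, hAm⟩ := exists_subset_Icc_neg_of_finite hfin
  obtain ⟨u, hu⟩ : ∃ u, u = 3 * m + 2 * |n| + 1 := ⟨_, rfl⟩
  have hn_le : n ≤ |n| := le_abs_self n
  have hn_ge : -|n| ≤ n := neg_abs_le n
  have hAA : A + A ⊆ Icc (-m + -m : ℤ) (m + m) :=
    (add_subset_add hAm hAm).trans (Icc_add_Icc_subset ..)
  refine ⟨A ∪ {u, n - u}, subset_union_left, hfin.union (toFinite _),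
    hA.union (isSidon_pair u (n - u)) ?_ ?_ ?_ ?_,
    ⟨u, by simp, n - u, by simp, add_sub_cancel u n⟩⟩
  · refine disjoint_right.2 ?_
    rintro _ ⟨_, (rfl | rfl), _, (rfl | rfl), rfl⟩ hmem
    · have := hAA hmem
      simp only [mem_Icc] at this
      omega
    · exact hn (by simpa only [add_sub_cancel] using hmem)
    · exact hn (by simpa only [sub_add_cancel] using hmem)
    · have := hAA hmem
      simp only [mem_Icc] at this
      omega
  · refine disjoint_right.2 ?_
    rintro _ ⟨a, ha, b, (rfl | rfl), rfl⟩ hmem <;>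
    · have := hAA hmem
      have := hAm ha
      simp only [mem_Icc] at *
      omega
  · refine disjoint_left.2 ?_
    rintro _ ⟨_, (rfl | rfl), _, (rfl | rfl), rfl⟩ ⟨a, ha, _, (rfl | rfl), h⟩ <;>
    · have := hAm ha
      simp only [mem_Icc] at *
      omega
  · rintro ⟨a, v⟩ ⟨ha, hv⟩ ⟨b, w⟩ ⟨hb, hw⟩ (h : a + v = b + w)
    have hvw : v = w := by
      have := hAm ha
      have := hAm hb
      simp only [mem_Icc, mem_insert_iff, mem_singleton_iff] at *
      omega
    obtain rfl := hvw
    rw [add_right_cancel h]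

end IsSidon

end Int

section Counting

theorem finite_setOf_mem_Icc_cast (A : Set ℤ) (y x : ℝ) :
    {a : ℤ | a ∈ A ∧ y ≤ (a : ℝ) ∧ (a : ℝ) ≤ x}.Finite :=
  (finite_Icc ⌈y⌉ ⌊x⌋).subset fun _ ⟨_, hya, hax⟩ ↦ ⟨Int.ceil_le.2 hya, Int.le_floor.2 hax⟩

theorem countIn_mono {A B : Set ℤ} (hAB : A ⊆ B) (y x : ℝ) : countIn A y x ≤ countIn B y x :=
  ncard_le_ncard (fun _ ha ↦ ⟨hAB ha.1, ha.2⟩) (finite_setOf_mem_Icc_cast B y x)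

theorem card_le_countIn {A : Set ℤ} {F : Finset ℤ} (hFA : (F : Set ℤ) ⊆ A) {y x : ℝ}
    (hF : ∀ a ∈ F, y ≤ (a : ℝ) ∧ (a : ℝ) ≤ x) : #F ≤ countIn A y x := by
  rw [← ncard_coe_finset]
  exact ncard_le_ncard (fun a ha ↦ ⟨hFA ha, hF a ha⟩) (finite_setOf_mem_Icc_cast A y x)

namespace IsSidon

theorem card_sq_le_of_subset_Icc {F : Finset ℤ} (hF : IsSidon (F : Set ℤ)) {a b : ℤ}
    (hab : a ≤ b) (hFab : (F : Set ℤ) ⊆ Icc a b) : (#F : ℤ) ^ 2 ≤ 4 * (b - a) + 2 := by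
  have hsub : F + F ⊆ Finset.Icc (a + a) (b + b) := by
    rw [← Finset.coe_subset, Finset.coe_add, Finset.coe_Icc]
    exact (add_subset_add hFab hFab).trans (Icc_add_Icc_subset ..)
  have hchoose : (#F + 1).choose 2 ≤ (b + b + 1 - (a + a)).toNat := by
    rw [← hF.card_add_self, ← Int.card_Icc]
    exact Finset.card_le_card hsub
  have htwice : (#F + 1) * #F = (#F + 1).choose 2 * 2 := by
    rw [Nat.choose_two_right, Nat.div_mul_cancel (Nat.even_mul_pred_self _).two_dvd,
      Nat.add_sub_cancel]
  zify at hchoose htwice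
  rw [Int.toNat_of_nonneg (by linarith)] at hchoose
  nlinarith

variable {A : Set ℤ}

theorem countIn_neg_self_le (hA : IsSidon A) {x : ℝ} (hx : 1 ≤ x) :
    countIn A (-x) x ≤ 4 * √x := by
  have hfin := finite_setOf_mem_Icc_cast A (-x) x
  have hF : IsSidon (hfin.toFinset : Set ℤ) := hA.mono fun a ha ↦ (hfin.mem_toFinset.1 ha).1
  have hfloor : 0 ≤ ⌊x⌋ := Int.floor_nonneg.2 (by linarith)
  have hF_Icc : (hfin.toFinset : Set ℤ) ⊆ Icc (-⌊x⌋) ⌊x⌋ := fun a ha ↦ by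
    obtain ⟨-, hxa, hax⟩ := hfin.mem_toFinset.1 ha
    exact ⟨neg_le.1 (Int.le_floor.2 (by push_cast; linarith)), Int.le_floor.2 hax⟩
  have hsq := hF.card_sq_le_of_subset_Icc (by linarith) hF_Icc
  rw [← ncard_eq_toFinset_card _ hfin] at hsq
  have hsq_real : (countIn A (-x) x : ℝ) ^ 2 ≤ 4 * (⌊x⌋ - -⌊x⌋) + 2 := by exact_mod_cast hsq
  refine le_of_sq_le_sq ?_ (by positivity)
  rw [mul_pow, Real.sq_sqrt (by linarith)]
  linarith [Int.floor_le x]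

theorem isBoundedUnder_countIn_div_sqrt (hA : IsSidon A) :
    IsBoundedUnder (· ≤ ·) atTop fun x : ℝ ↦ (countIn A (-x) x : ℝ) / √x := by
  refine ⟨4, eventually_map.2 ?_⟩
  filter_upwards [eventually_ge_atTop 1] with x hx
  exact div_le_of_le_mul₀ (Real.sqrt_nonneg x) zero_le_four (hA.countIn_neg_self_le hx)

theorem exists_union_prime_le_countIn (hA : IsSidon A) {m : ℕ} (hAm : A ⊆ Icc (-m : ℤ) m) {p : ℕ}
    (hp : p.Prime) :
    ∃ F : Finset ℤ, IsSidon (A ∪ F) ∧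
      p ≤ countIn (A ∪ F) (-(2 * (m + p) ^ 2)) (2 * (m + p) ^ 2) + (4 * m + 2) := by
  obtain ⟨B, hB, hBsub, hBcard⟩ := exists_isSidon_int_card_eq_prime_sub_one hp
  obtain ⟨F, hAF, hFsub, hFcard⟩ := hA.exists_union_card_le hAm hB hBsub
  have hF_le : ∀ a ∈ F, -(2 * (m + p) ^ 2 : ℝ) ≤ a ∧ (a : ℝ) ≤ 2 * (m + p) ^ 2 := by
    intro a ha
    obtain ⟨ha_nonneg, ha_le⟩ := hFsub ha
    have hp_ge : (1 : ℝ) ≤ p := Nat.one_le_cast.2 hp.one_le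
    have ha_nonneg_real : (0 : ℝ) ≤ a := Int.cast_nonneg ha_nonneg
    have ha_le_real : (a : ℝ) ≤ 2 * ((p - 1) * p) + 3 * m := by
      rw [← Nat.cast_pred hp.pos]
      exact_mod_cast ha_le
    constructor <;> nlinarith [m.cast_nonneg (α := ℝ)]
  have hF_count := card_le_countIn (subset_union_right (s := A)) hF_le
  exact ⟨F, hAF, by omega⟩

theorem exists_superset_le_countIn_div_sqrt (hA : IsSidon A) (hfin : A.Finite) {c : ℝ}
    (hc : c < √2 / 2) (y : ℝ) :
    ∃ B, A ⊆ B ∧ B.Finite ∧ IsSidon B ∧ ∃ x ≥ y, c ≤ countIn B (-x) x / √x := by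
  obtain ⟨m, hAm⟩ := exists_subset_Icc_neg_of_finite hfin
  have hlim : Tendsto (fun p : ℕ ↦ (-(4 * m + 2) + 1 * p : ℝ) / (√2 * m + √2 * p)) atTop
      (𝓝 (√2 / 2)) := by
    rw [Real.sqrt_div_self']
    exact tendsto_add_mul_div_add_mul_atTop_nhds _ _ _ (by positivity)
  have hprime : ∃ᶠ p : ℕ in atTop, p.Prime :=
    Nat.frequently_atTop_iff_infinite.2 Nat.infinite_setOfPred_prime
  obtain ⟨p, hp, hyp, hcp⟩ := (hprime.and_eventually
    ((tendsto_natCast_atTop_atTop.eventually_ge_atTop y).and (hlim.eventually_const_lt hc))).exists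
  obtain ⟨F, hAF, hcount⟩ := hA.exists_union_prime_le_countIn hAm hp
  have hp_ge : (1 : ℝ) ≤ p := Nat.one_le_cast.2 hp.one_le
  refine ⟨A ∪ F, subset_union_left, hfin.union F.finite_toSet, hAF, 2 * (m + p) ^ 2,
    by nlinarith [m.cast_nonneg (α := ℝ)], hcp.le.trans ?_⟩
  rw [Real.sqrt_mul zero_le_two, Real.sqrt_sq (by positivity), mul_add]
  gcongr
  rw [one_mul, neg_add_le_iff_le_add, add_comm]
  exact_mod_cast hcount

end IsSidon

end Counting

theorem IsSidon.isUniqueRepBasis {A : Set ℤ} (hA : IsSidon A) (hadd : A + A = univ) :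
    IsUniqueRepBasis A := by
  intro n
  obtain ⟨a, ha, b, hb, rfl⟩ : n ∈ A + A := hadd ▸ mem_univ n
  refine ncard_eq_one.2 ⟨(min a b, max a b), eq_singleton_iff_unique_mem.2 ⟨?_, ?_⟩⟩
  · exact ⟨by rcases min_choice a b with h | h <;> rwa [h],
      by rcases max_choice a b with h | h <;> rwa [h], min_le_max, min_add_max a b⟩
  · rintro ⟨c, d⟩ ⟨hc, hd, hcd : c ≤ d, hsum⟩
    rcases hA hc hd ha hb hsum with ⟨rfl, rfl⟩ | ⟨rfl, rfl⟩
    · rw [min_eq_left hcd, max_eq_right hcd]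
    · rw [min_eq_right hcd, max_eq_left hcd]

theorem exists_isSidon_forall_of_forall_finite_superset {M ι : Type*} [Add M] [Countable ι]
    {R : ι → Set M → Prop} (hmono : ∀ i, Monotone (R i))
    (hext : ∀ i A, A.Finite → IsSidon A → ∃ B, A ⊆ B ∧ B.Finite ∧ IsSidon B ∧ R i B) :
    ∃ A : Set M, IsSidon A ∧ ∀ i, R i A := by
  have := Encodable.ofCountable ι
  let P := {A : Set M // A.Finite ∧ IsSidon A}
  let D (i : ι) : Order.Cofinal P :=
    { carrier := {A | R i A}
      isCofinal := fun ⟨A, hfin, hA⟩ ↦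
        let ⟨B, hAB, hBfin, hB, hRB⟩ := hext i A hfin hA
        ⟨⟨B, hBfin, hB⟩, hRB, hAB⟩ }
  let empty : P := ⟨∅, finite_empty, fun _ h ↦ h.elim⟩
  let I := Order.idealOfCofinals empty D
  have : Nonempty I := I.nonempty.to_subtype
  refine ⟨⋃ B : I, B.1.1, .iUnion_of_directed (directedOn_iff_directed.1 I.directed)
    fun B ↦ B.1.2.2, fun i ↦ ?_⟩
  obtain ⟨B, hRB, hBI⟩ := Order.cofinal_meets_idealOfCofinals empty D i
  exact hmono i (subset_iUnion (fun B : I ↦ B.1.1) ⟨B, hBI⟩) hRB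

theorem exists_isSidon_add_self_eq_univ_frequently_le :
    ∃ A : Set ℤ, IsSidon A ∧ A + A = univ ∧
      ∀ q : ℚ, q < √2 / 2 → ∃ᶠ x : ℝ in atTop, q ≤ countIn A (-x) x / √x := by
  let R : ℤ ⊕ {q : ℚ // q < √2 / 2} × ℕ → Set ℤ → Prop := Sum.elim
    (fun n A ↦ n ∈ A + A) (fun q A ↦ ∃ x ≥ (q.2 : ℝ), (q.1 : ℝ) ≤ countIn A (-x) x / √x)
  have hmono : ∀ i, Monotone (R i) := by
    rintro (n | ⟨q, N⟩) A B hAB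
    · exact fun hn ↦ add_subset_add hAB hAB hn
    · rintro ⟨x, hx, hqx⟩
      refine ⟨x, hx, hqx.trans ?_⟩
      gcongr
      exact countIn_mono hAB _ _
  have hext : ∀ i A, A.Finite → IsSidon A → ∃ B, A ⊆ B ∧ B.Finite ∧ IsSidon B ∧ R i B := by
    rintro (n | ⟨⟨q, hq⟩, N⟩) A hfin hA
    · exact hA.exists_superset_mem_add_self hfin n
    · exact hA.exists_superset_le_countIn_div_sqrt hfin hq N
  obtain ⟨A, hA, hR⟩ := exists_isSidon_forall_of_forall_finite_superset hmono hext
  refine ⟨A, hA, eq_univ_of_forall fun n ↦ hR (.inl n), fun q hq ↦ frequently_atTop.2 fun y ↦ ?_⟩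
  obtain ⟨N, hN⟩ := exists_nat_ge y
  obtain ⟨x, hx, hqx⟩ := hR (.inr (⟨q, hq⟩, N))
  exact ⟨x, hN.trans hx, hqx⟩

/-- There exists a unique representation basis `A` such that
`limsup_{x→∞} A(-x,x)/√x ≥ √2/2`. -/
theorem exists_urb_limsup_ge :
    ∃ A : Set ℤ, IsUniqueRepBasis A ∧
      Real.sqrt 2 / 2 ≤
        limsup (fun x : ℝ => (countIn A (-x) x : ℝ) / Real.sqrt x) atTop := by
  obtain ⟨A, hA, hadd, hfreq⟩ := exists_isSidon_add_self_eq_univ_frequently_le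
  refine ⟨A, hA.isUniqueRepBasis hadd, le_of_forall_rat_lt_imp_le fun q hq ↦ ?_⟩
  exact le_limsup_of_frequently_le (hfreq q hq) hA.isBoundedUnder_countIn_div_sqrt
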